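/- A PEUF p-formula F is universally valid if and only if F is true under every maximally diverse interpretation (over every nonempty domain). -/

import Mathlib

mutual
inductive EufTerm (Fn Pr : Type) : Type
  | app : Fn → List (EufTerm Fn Pr) → EufTerm Fn Pr
  | ite : EufFormula Fn Pr → EufTerm Fn Pr → EufTerm Fn Pr → EufTerm Fn Pr
inductive EufFormula (Fn Pr : Type) : Type
  | tt : EufFormula Fn Pr
  | ff : EufFormula Fn Pr
  | not : EufFormula Fn Pr → EufFormula Fn Pr
  | and : EufFormula Fn Pr → EufFormula Fn Pr → EufFormula Fn Pr
  | or : EufFormula Fn Pr → EufFormula Fn Pr → EufFormula Fn Pr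
  | eq : EufTerm Fn Pr → EufTerm Fn Pr → EufFormula Fn Pr
  | papp : Pr → List (EufTerm Fn Pr) → EufFormula Fn Pr
end

structure Interp (Fn Pr : Type) (D : Type u) where
  fn : Fn → List D → D
  pr : Pr → List D → Bool

open Classical in
mutual
noncomputable def evalT {Fn Pr : Type} {D : Type} (I : Interp Fn Pr D) : EufTerm Fn Pr → D
  | .app f args => I.fn f (args.attach.map (fun t => evalT I t.1))
  | .ite G T1 T2 => if evalF I G then evalT I T1 else evalT I T2
termination_by t => sizeOf t
decreasing_by
  all_goals simp_wf
  all_goals try omega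
  all_goals (have := List.sizeOf_lt_of_mem t.2; omega)
noncomputable def evalF {Fn Pr : Type} {D : Type} (I : Interp Fn Pr D) : EufFormula Fn Pr → Bool
  | .tt => true
  | .ff => false
  | .not G => !evalF I G
  | .and G1 G2 => evalF I G1 && evalF I G2
  | .or G1 G2 => evalF I G1 || evalF I G2
  | .eq T1 T2 => decide (evalT I T1 = evalT I T2)
  | .papp p args => I.pr p (args.attach.map (fun t => evalT I t.1))
termination_by g => sizeOf g
decreasing_by
  all_goals simp_wf
  all_goals try omega
  all_goals (have := List.sizeOf_lt_of_mem t.2; omega)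
end
def ValidOn {Fn Pr : Type} (F : EufFormula Fn Pr) (D : Type) : Prop :=
  ∀ I : Interp Fn Pr D, evalF I F = true

def UniversallyValid {Fn Pr : Type} (F : EufFormula Fn Pr) : Prop :=
  ∀ D : Type, Nonempty D → ValidOn F D

/-- Expressions: terms or formulas. -/
inductive EufExpr (Fn Pr : Type) : Type
  | t : EufTerm Fn Pr → EufExpr Fn Pr
  | f : EufFormula Fn Pr → EufExpr Fn Pr

/-- Immediate (proper) subexpression relation. -/
inductive ImmSub {Fn Pr : Type} : EufExpr Fn Pr → EufExpr Fn Pr → Prop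
  | appArg {g : Fn} {args : List (EufTerm Fn Pr)} {T : EufTerm Fn Pr} :
      T ∈ args → ImmSub (.t T) (.t (.app g args))
  | iteC {G : EufFormula Fn Pr} {T1 T2 : EufTerm Fn Pr} : ImmSub (.f G) (.t (.ite G T1 T2))
  | ite1 {G : EufFormula Fn Pr} {T1 T2 : EufTerm Fn Pr} : ImmSub (.t T1) (.t (.ite G T1 T2))
  | ite2 {G : EufFormula Fn Pr} {T1 T2 : EufTerm Fn Pr} : ImmSub (.t T2) (.t (.ite G T1 T2))
  | not {G : EufFormula Fn Pr} : ImmSub (.f G) (.f (.not G))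
  | andL {G1 G2 : EufFormula Fn Pr} : ImmSub (.f G1) (.f (.and G1 G2))
  | andR {G1 G2 : EufFormula Fn Pr} : ImmSub (.f G2) (.f (.and G1 G2))
  | orL {G1 G2 : EufFormula Fn Pr} : ImmSub (.f G1) (.f (.or G1 G2))
  | orR {G1 G2 : EufFormula Fn Pr} : ImmSub (.f G2) (.f (.or G1 G2))
  | eqL {T1 T2 : EufTerm Fn Pr} : ImmSub (.t T1) (.f (.eq T1 T2))
  | eqR {T1 T2 : EufTerm Fn Pr} : ImmSub (.t T2) (.f (.eq T1 T2))
  | pappArg {p : Pr} {args : List (EufTerm Fn Pr)} {T : EufTerm Fn Pr} :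
      T ∈ args → ImmSub (.t T) (.f (.papp p args))

/-- `SubExpr a b`: `a` occurs (as a subexpression) in `b`. -/
def SubExpr {Fn Pr : Type} (a b : EufExpr Fn Pr) : Prop := Relation.ReflTransGen ImmSub a b

def TermInT {Fn Pr : Type} (T S : EufTerm Fn Pr) : Prop := SubExpr (.t T) (.t S)
def TermInF {Fn Pr : Type} (T : EufTerm Fn Pr) (F : EufFormula Fn Pr) : Prop :=
  SubExpr (.t T) (.f F)
def FormulaInT {Fn Pr : Type} (G : EufFormula Fn Pr) (S : EufTerm Fn Pr) : Prop :=
  SubExpr (.f G) (.t S)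
def FormulaInF {Fn Pr : Type} (G F : EufFormula Fn Pr) : Prop := SubExpr (.f G) (.f F)

def IsAppTerm {Fn Pr : Type} : EufTerm Fn Pr → Prop
  | .app _ _ => True
  | _ => False

/-- `𝒯(F)`: the function application terms occurring in `F`. -/
def AppTermsF {Fn Pr : Type} (F : EufFormula Fn Pr) : Set (EufTerm Fn Pr) :=
  {T | IsAppTerm T ∧ TermInF T F}

/-- A function symbol occurs in `F` when some application of it occurs in `F`. -/
def FnInF {Fn Pr : Type} (g : Fn) (F : EufFormula Fn Pr) : Prop :=
  ∃ args, TermInF (EufTerm.app g args) F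

def PrInF {Fn Pr : Type} (p : Pr) (F : EufFormula Fn Pr) : Prop :=
  ∃ args, FormulaInF (EufFormula.papp p args) F

/-- `I` is diverse for `F` with respect to the set `Sg` of function symbols. -/
def DiverseFor {Fn Pr D : Type} (I : Interp Fn Pr D) (F : EufFormula Fn Pr)
    (Sg : Set Fn) : Prop :=
  ∀ (g : Fn) (args : List (EufTerm Fn Pr)), g ∈ Sg →
    TermInF (EufTerm.app g args) F →
    ∀ T2 ∈ AppTermsF F, evalT I (EufTerm.app g args) = evalT I T2 →
      ∃ args2, T2 = EufTerm.app g args2 ∧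
        List.Forall₂ (fun a b => evalT I a = evalT I b) args args2

mutual
/-- PEUF g-terms, where `isP` designates the p-function symbols. -/
inductive IsGTerm {Fn Pr : Type} (isP : Fn → Prop) : EufTerm Fn Pr → Prop
  | ite {G : EufFormula Fn Pr} {T1 T2 : EufTerm Fn Pr} :
      IsGFormula isP G → IsGTerm isP T1 → IsGTerm isP T2 → IsGTerm isP (.ite G T1 T2)
  | app {g : Fn} {args : List (EufTerm Fn Pr)} :
      ¬ isP g → (∀ T ∈ args, IsPTerm isP T) → IsGTerm isP (.app g args)
/-- PEUF p-terms. -/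
inductive IsPTerm {Fn Pr : Type} (isP : Fn → Prop) : EufTerm Fn Pr → Prop
  | g {T : EufTerm Fn Pr} : IsGTerm isP T → IsPTerm isP T
  | ite {G : EufFormula Fn Pr} {T1 T2 : EufTerm Fn Pr} :
      IsGFormula isP G → IsPTerm isP T1 → IsPTerm isP T2 → IsPTerm isP (.ite G T1 T2)
  | app {g : Fn} {args : List (EufTerm Fn Pr)} :
      isP g → (∀ T ∈ args, IsPTerm isP T) → IsPTerm isP (.app g args)
/-- PEUF g-formulas. -/
inductive IsGFormula {Fn Pr : Type} (isP : Fn → Prop) : EufFormula Fn Pr → Prop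
  | tt : IsGFormula isP .tt
  | ff : IsGFormula isP .ff
  | not {G : EufFormula Fn Pr} : IsGFormula isP G → IsGFormula isP (.not G)
  | and {G1 G2 : EufFormula Fn Pr} :
      IsGFormula isP G1 → IsGFormula isP G2 → IsGFormula isP (.and G1 G2)
  | or {G1 G2 : EufFormula Fn Pr} :
      IsGFormula isP G1 → IsGFormula isP G2 → IsGFormula isP (.or G1 G2)
  | eq {T1 T2 : EufTerm Fn Pr} :
      IsGTerm isP T1 → IsGTerm isP T2 → IsGFormula isP (.eq T1 T2)
  | papp {p : Pr} {args : List (EufTerm Fn Pr)} :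
      (∀ T ∈ args, IsPTerm isP T) → IsGFormula isP (.papp p args)
/-- PEUF p-formulas. -/
inductive IsPFormula {Fn Pr : Type} (isP : Fn → Prop) : EufFormula Fn Pr → Prop
  | g {G : EufFormula Fn Pr} : IsGFormula isP G → IsPFormula isP G
  | and {G1 G2 : EufFormula Fn Pr} :
      IsPFormula isP G1 → IsPFormula isP G2 → IsPFormula isP (.and G1 G2)
  | or {G1 G2 : EufFormula Fn Pr} :
      IsPFormula isP G1 → IsPFormula isP G2 → IsPFormula isP (.or G1 G2)
  | eq {T1 T2 : EufTerm Fn Pr} :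
      IsPTerm isP T1 → IsPTerm isP T2 → IsPFormula isP (.eq T1 T2)
end

/-- The p-function symbols occurring in `F`. -/
def PSymbolsIn {Fn Pr : Type} (isP : Fn → Prop) (F : EufFormula Fn Pr) : Set Fn :=
  {g | isP g ∧ FnInF g F}

/-- `I` is maximally diverse for the p-formula `F`. -/
def MaxDiverse {Fn Pr D : Type} (isP : Fn → Prop) (I : Interp Fn Pr D)
    (F : EufFormula Fn Pr) : Prop :=
  DiverseFor I F (PSymbolsIn isP F)

/-- `I'` refines `I` on the term set `Ts`. -/
def RefinesOn {Fn Pr D D' : Type} (I' : Interp Fn Pr D') (I : Interp Fn Pr D)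
    (Ts : Set (EufTerm Fn Pr)) : Prop :=
  ∀ T1 ∈ Ts, ∀ T2 ∈ Ts, evalT I' T1 = evalT I' T2 → evalT I T1 = evalT I T2

def ProperRefinesOn {Fn Pr D D' : Type} (I' : Interp Fn Pr D') (I : Interp Fn Pr D)
    (Ts : Set (EufTerm Fn Pr)) : Prop :=
  RefinesOn I' I Ts ∧
    ∃ T1 ∈ Ts, ∃ T2 ∈ Ts, evalT I T1 = evalT I T2 ∧ evalT I' T1 ≠ evalT I' T2

/-!
Any interpretation `I` is covered by one in which each application of a p-function symbol creates a
new value, recording the symbol, its arguments and the value it takes under `I`. Distinct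
applications of p-function symbols then never collide, so the cover is maximally diverse for every
formula. Forgetting the records maps the cover homomorphically onto `I` and is injective on the
values of g-terms. Hence g-formulas keep their truth value, while equations between p-terms, which
occur only positively in a p-formula, can only become true when passing from the cover to `I`.
-/

namespace Interp

variable {Fn Pr D D' : Type}

theorem evalT_app (I : Interp Fn Pr D) (f : Fn) (args : List (EufTerm Fn Pr)) :
    evalT I (.app f args) = I.fn f (args.map (evalT I)) := by
  rw [evalT, List.attach_map_val]

theorem evalF_papp (I : Interp Fn Pr D) (p : Pr) (args : List (EufTerm Fn Pr)) :
    evalF I (.papp p args) = I.pr p (args.map (evalT I)) := by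
  rw [evalF, List.attach_map_val]

theorem evalF_eq_iff (I : Interp Fn Pr D) (T₁ T₂ : EufTerm Fn Pr) :
    evalF I (.eq T₁ T₂) = true ↔ evalT I T₁ = evalT I T₂ := by
  simp only [evalF, decide_eq_true_eq]

/-- The function symbols in `Sg` are interpreted as free constructors: a value of one of them
determines the symbol, among all function symbols, and the argument list. -/
def IsFreeOn (I : Interp Fn Pr D) (Sg : Set Fn) : Prop :=
  ∀ f ∈ Sg, ∀ g xs ys, I.fn f xs = I.fn g ys → f = g ∧ xs = ys

theorem IsFreeOn.mono {I : Interp Fn Pr D} {Sg Sg' : Set Fn} (hI : I.IsFreeOn Sg')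
    (hSg : Sg ⊆ Sg') : I.IsFreeOn Sg :=
  fun f hf => hI f (hSg hf)

theorem IsFreeOn.diverseFor {I : Interp Fn Pr D} {Sg : Set Fn} (hI : I.IsFreeOn Sg)
    (F : EufFormula Fn Pr) : DiverseFor I F Sg := by
  rintro f args hf - (⟨g, args'⟩ | _) ⟨happ, -⟩ heq
  · rw [evalT_app, evalT_app] at heq
    obtain ⟨rfl, hargs⟩ := hI f hf g _ _ heq
    refine ⟨args', rfl, ?_⟩
    rwa [← List.forall₂_eq_eq_eq, List.forall₂_map_left_iff, List.forall₂_map_right_iff] at hargs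
  · exact happ.elim

theorem IsFreeOn.maxDiverse {isP : Fn → Prop} {I : Interp Fn Pr D}
    (hI : I.IsFreeOn {f | isP f}) (F : EufFormula Fn Pr) : MaxDiverse isP I F :=
  (hI.mono fun _ hf => hf.1).diverseFor F

/-- The values of the g-function symbols under `I`, at arbitrary arguments. -/
def gValues (isP : Fn → Prop) (I : Interp Fn Pr D) : Set D :=
  {x | ∃ f xs, ¬ isP f ∧ I.fn f xs = x}

theorem evalT_mem_gValues {isP : Fn → Prop} (I : Interp Fn Pr D) {T : EufTerm Fn Pr} :
    IsGTerm isP T → evalT I T ∈ I.gValues isP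
  | .ite _ h₁ h₂ => by
    rw [evalT]
    split
    exacts [I.evalT_mem_gValues h₁, I.evalT_mem_gValues h₂]
  | .app hf _ => ⟨_, _, hf, (evalT_app I _ _).symm⟩

/-- `φ` is a homomorphism from `I'` to `I` that identifies no two values of g-function symbols, so
that an equation between g-terms holds under `I'` as soon as it holds under `I`. -/
structure IsGFaithfulHom (isP : Fn → Prop) (I' : Interp Fn Pr D') (I : Interp Fn Pr D)
    (φ : D' → D) : Prop where
  map_fn : ∀ f xs, φ (I'.fn f xs) = I.fn f (xs.map φ)
  map_pr : ∀ p xs, I'.pr p xs = I.pr p (xs.map φ)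
  injOn : Set.InjOn φ (I'.gValues isP)

namespace IsGFaithfulHom

variable {isP : Fn → Prop} {I' : Interp Fn Pr D'} {I : Interp Fn Pr D} {φ : D' → D}

mutual

theorem map_evalT_of_isGTerm (h : IsGFaithfulHom isP I' I φ) {T : EufTerm Fn Pr} :
    IsGTerm isP T → φ (evalT I' T) = evalT I T
  | .ite hG h₁ h₂ => by
    rw [evalT, evalT, apply_ite φ, h.evalF_eq_of_isGFormula hG, h.map_evalT_of_isGTerm h₁,
      h.map_evalT_of_isGTerm h₂]
  | .app _ hargs => by
    rw [evalT_app, evalT_app, h.map_fn, List.map_map]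
    exact congrArg _ (List.map_congr_left fun T hT => h.map_evalT_of_isPTerm (hargs T hT))

theorem map_evalT_of_isPTerm (h : IsGFaithfulHom isP I' I φ) {T : EufTerm Fn Pr} :
    IsPTerm isP T → φ (evalT I' T) = evalT I T
  | .g hT => h.map_evalT_of_isGTerm hT
  | .ite hG h₁ h₂ => by
    rw [evalT, evalT, apply_ite φ, h.evalF_eq_of_isGFormula hG, h.map_evalT_of_isPTerm h₁,
      h.map_evalT_of_isPTerm h₂]
  | .app _ hargs => by
    rw [evalT_app, evalT_app, h.map_fn, List.map_map]
    exact congrArg _ (List.map_congr_left fun T hT => h.map_evalT_of_isPTerm (hargs T hT))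

theorem evalF_eq_of_isGFormula (h : IsGFaithfulHom isP I' I φ) {G : EufFormula Fn Pr} :
    IsGFormula isP G → evalF I' G = evalF I G
  | .tt => by rw [evalF, evalF]
  | .ff => by rw [evalF, evalF]
  | .not hG => by rw [evalF, evalF, h.evalF_eq_of_isGFormula hG]
  | .and h₁ h₂ => by
    rw [evalF, evalF, h.evalF_eq_of_isGFormula h₁, h.evalF_eq_of_isGFormula h₂]
  | .or h₁ h₂ => by
    rw [evalF, evalF, h.evalF_eq_of_isGFormula h₁, h.evalF_eq_of_isGFormula h₂]
  | .eq h₁ h₂ => by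
    rw [Bool.eq_iff_iff, evalF_eq_iff, evalF_eq_iff, ← h.map_evalT_of_isGTerm h₁,
      ← h.map_evalT_of_isGTerm h₂]
    exact (h.injOn.eq_iff (I'.evalT_mem_gValues h₁) (I'.evalT_mem_gValues h₂)).symm
  | .papp hargs => by
    rw [evalF_papp, evalF_papp, h.map_pr, List.map_map]
    exact congrArg _ (List.map_congr_left fun T hT => h.map_evalT_of_isPTerm (hargs T hT))

end

theorem evalF_of_isPFormula (h : IsGFaithfulHom isP I' I φ) {F : EufFormula Fn Pr} :
    IsPFormula isP F → evalF I' F = true → evalF I F = true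
  | .g hG => (h.evalF_eq_of_isGFormula hG).symm.trans
  | .and h₁ h₂ => by
    rw [evalF, evalF, Bool.and_eq_true, Bool.and_eq_true]
    exact And.imp (h.evalF_of_isPFormula h₁) (h.evalF_of_isPFormula h₂)
  | .or h₁ h₂ => by
    rw [evalF, evalF, Bool.or_eq_true, Bool.or_eq_true]
    exact Or.imp (h.evalF_of_isPFormula h₁) (h.evalF_of_isPFormula h₂)
  | .eq h₁ h₂ => by
    rw [evalF_eq_iff, evalF_eq_iff, ← h.map_evalT_of_isPTerm h₁,
      ← h.map_evalT_of_isPTerm h₂]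
    exact congrArg φ

end IsGFaithfulHom

/-- The domain of the maximally diverse cover of an interpretation over `D`: the elements of `D`,
together with formal applications of function symbols. A formal application carries the element of
`D` that it stands for, so that `FormalDom.value` needs neither recursion nor the interpretation. -/
inductive FormalDom (Fn D : Type) : Type
  | base : D → FormalDom Fn D
  | formal : D → Fn → List (FormalDom Fn D) → FormalDom Fn D

/-- The element of `D` that an element of the cover stands for. -/
def FormalDom.value : FormalDom Fn D → D
  | base d => d
  | formal d _ _ => d

open Classical in
/-- The maximally diverse cover of `I`: p-function symbols build formal applications, while all
other symbols act on the underlying elements of `D`. -/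
noncomputable def diversify (isP : Fn → Prop) (I : Interp Fn Pr D) :
    Interp Fn Pr (FormalDom Fn D) where
  fn f xs :=
    let d := I.fn f (xs.map FormalDom.value)
    if isP f then .formal d f xs else .base d
  pr p xs := I.pr p (xs.map FormalDom.value)

variable {isP : Fn → Prop} {f : Fn}

theorem diversify_fn_of_isP (I : Interp Fn Pr D) (hf : isP f) (xs : List (FormalDom Fn D)) :
    (I.diversify isP).fn f xs = .formal (I.fn f (xs.map FormalDom.value)) f xs :=
  if_pos hf

theorem diversify_fn_of_not_isP (I : Interp Fn Pr D) (hf : ¬ isP f)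
    (xs : List (FormalDom Fn D)) :
    (I.diversify isP).fn f xs = .base (I.fn f (xs.map FormalDom.value)) :=
  if_neg hf

theorem isFreeOn_diversify (isP : Fn → Prop) (I : Interp Fn Pr D) :
    (I.diversify isP).IsFreeOn {f | isP f} := by
  intro f (hf : isP f) g xs ys heq
  rw [diversify_fn_of_isP I hf] at heq
  by_cases hg : isP g
  · rw [diversify_fn_of_isP I hg] at heq
    exact (FormalDom.formal.inj heq).2
  · rw [diversify_fn_of_not_isP I hg] at heq
    cases heq

theorem isGFaithfulHom_value (isP : Fn → Prop) (I : Interp Fn Pr D) :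
    IsGFaithfulHom isP (I.diversify isP) I FormalDom.value where
  map_fn f xs := by
    by_cases hf : isP f
    · rw [diversify_fn_of_isP I hf, FormalDom.value]
    · rw [diversify_fn_of_not_isP I hf, FormalDom.value]
  map_pr _ _ := rfl
  injOn := by
    rintro _ ⟨f, xs, hf, rfl⟩ _ ⟨g, ys, hg, rfl⟩ heq
    rw [diversify_fn_of_not_isP I hf, diversify_fn_of_not_isP I hg] at heq ⊢
    exact congrArg FormalDom.base heq

end Interp

/-- A PEUF p-formula is universally valid iff it is true under every
maximally diverse interpretation over every nonempty domain. -/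
theorem diverse_theorem {Fn Pr : Type} (isP : Fn → Prop) (F : EufFormula Fn Pr)
    (hF : IsPFormula isP F) :
    UniversallyValid F ↔
      ∀ (D : Type), Nonempty D → ∀ I : Interp Fn Pr D,
        MaxDiverse isP I F → evalF I F = true := by
  refine ⟨fun hvalid D hD I _ => hvalid D hD I, fun hdiverse D hD I => ?_⟩
  have hcover : evalF (I.diversify isP) F = true :=
    hdiverse _ (hD.map .base) _ ((I.isFreeOn_diversify isP).maxDiverse F)
  exact (I.isGFaithfulHom_value isP).evalF_of_isPFormula hF hcover
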